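/- arXiv:1602.02603 — 5 statements merged into one kernel-verified Lean document; each statement's English description precedes it below -/
import Mathlib

section
/- Milnor–Švarc Lemma: Let Γ be a group acting by isometries on a nonempty geodesic metric space X, and suppose the action is proper and cobounded. Then Γ is finitely generated; moreover, for every basepoint x₀ ∈ X there exist a finite generating set S of Γ and constants k ≥ 1, c ≥ 0, r ≥ 0 such that the orbit map ψ : Γ → X, ψ(γ) = γ·x₀, satisfies d_S(γ₁,γ₂)/k − c ≤ d(ψ(γ₁),ψ(γ₂)) ≤ k·d_S(γ₁,γ₂) + c for all γ₁,γ₂ ∈ Γ, and the image ψ(Γ) is r-dense in X; that is, ψ is a quasi-isometry from (Γ, d_S) to X. -/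
/-!
Fix a basepoint `x₀`. Moving the centre of the coboundedness hypothesis, the orbit of `x₀` is
`R`-dense for some `R > 0`. The generating set is `S = {γ | dist x₀ (γ • x₀) ≤ 2 * R + 1}`, which is
finite by properness. To write `γ` as a word in `S`, walk back from `γ • x₀` a distance `R + 1`
along a geodesic to `x₀` and jump to an orbit point `δ • x₀` within `R` of the point reached: then
`δ⁻¹ * γ ∈ S`, and `δ • x₀` is closer to `x₀` than `γ • x₀` by one unit in the relevant bound. Hence
the word length of `γ` is at most `dist x₀ (γ • x₀) + 2` (`exists_word`). Conversely each letter
moves `x₀` by at most `2 * R + 1`, so the orbit map is Lipschitz (`dist_prod_smul_le`).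
-/

/-- The word length of `γ` with respect to a generating set `S`: the least `n` such that
`γ` is a product of `n` elements of `S ∪ S⁻¹`. -/
noncomputable def wordLength {Γ : Type*} [Group Γ] (S : Set Γ) (γ : Γ) : ℕ :=
  sInf {n | ∃ l : List Γ, l.length = n ∧ (∀ x ∈ l, x ∈ S ∨ x⁻¹ ∈ S) ∧ l.prod = γ}

/-- The word metric on a group with respect to a generating set `S`. -/
noncomputable def wordDist {Γ : Type*} [Group Γ] (S : Set Γ) (γ₁ γ₂ : Γ) : ℝ :=
  (wordLength S (γ₁⁻¹ * γ₂) : ℝ)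

theorem wordLength_le {Γ : Type*} [Group Γ] {S : Set Γ} (l : List Γ)
    (hl : ∀ x ∈ l, x ∈ S ∨ x⁻¹ ∈ S) : wordLength S l.prod ≤ l.length :=
  Nat.sInf_le ⟨l, rfl, hl, rfl⟩

/-- If `γ` is a product of letters from `S ∪ S⁻¹`, the infimum defining the word length is
attained. -/
theorem exists_word_length_eq {Γ : Type*} [Group Γ] {S : Set Γ} (l : List Γ)
    (hl : ∀ x ∈ l, x ∈ S ∨ x⁻¹ ∈ S) :
    ∃ l' : List Γ, l'.length = wordLength S l.prod ∧ (∀ x ∈ l', x ∈ S ∨ x⁻¹ ∈ S) ∧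
      l'.prod = l.prod :=
  Nat.sInf_mem (s := {n | ∃ l' : List Γ, l'.length = n ∧ (∀ x ∈ l', x ∈ S ∨ x⁻¹ ∈ S) ∧
    l'.prod = l.prod}) ⟨l.length, l, rfl, hl, rfl⟩

theorem dist_prod_smul_le {Γ : Type*} [Group Γ] {X : Type*} [MetricSpace X] [MulAction Γ X]
    (hiso : ∀ γ : Γ, Isometry (fun x : X => γ • x)) (x₀ : X) (k : ℝ) (l : List Γ)
    (hl : ∀ x ∈ l, dist x₀ (x • x₀) ≤ k) : dist x₀ (l.prod • x₀) ≤ k * l.length := by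
  induction l with
  | nil => simp
  | cons a l ih =>
    have h1 := ih fun x hx => hl x (List.mem_cons_of_mem _ hx)
    have h2 := hl a List.mem_cons_self
    have h3 : dist (a • x₀) (a • l.prod • x₀) = dist x₀ (l.prod • x₀) := (hiso a).dist_eq _ _
    have h4 := dist_triangle x₀ (a • x₀) (a • l.prod • x₀)
    rw [List.prod_cons, mul_smul, List.length_cons]
    push_cast
    linarith

/-- An element moving `x₀` by at most `R + n` is a product of `n + 1` elements each moving `x₀` by
at most `2 * R + 1`. -/
theorem exists_word {Γ : Type*} [Group Γ] {X : Type*} [MetricSpace X] [MulAction Γ X]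
    (hiso : ∀ γ : Γ, Isometry (fun x : X => γ • x))
    (hgeodesic : ∀ x y : X, ∃ γ : ℝ → X, γ 0 = x ∧ γ (dist x y) = y ∧
      ∀ s ∈ Set.Icc (0 : ℝ) (dist x y), ∀ t ∈ Set.Icc (0 : ℝ) (dist x y),
        dist (γ s) (γ t) = |s - t|)
    (x₀ : X) {R : ℝ} (hR : 0 < R) (hdense : ∀ x : X, ∃ γ : Γ, dist x (γ • x₀) ≤ R) (n : ℕ) :
    ∀ γ : Γ, dist x₀ (γ • x₀) ≤ R + n →
      ∃ l : List Γ, l.length = n + 1 ∧ (∀ x ∈ l, dist x₀ (x • x₀) ≤ 2 * R + 1) ∧ l.prod = γ := by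
  induction n with
  | zero =>
    intro γ hγ
    refine ⟨[γ], rfl, ?_, by simp⟩
    simp only [List.mem_singleton, forall_eq]
    norm_num at hγ
    linarith
  | succ n ih =>
    intro γ hγ
    push_cast at hγ
    obtain ⟨g, hg0, hg1, hg⟩ := hgeodesic x₀ (γ • x₀)
    set L := dist x₀ (γ • x₀) with hL
    have hL0 : 0 ≤ L := dist_nonneg
    -- Truncating at `0` covers the case where `γ • x₀` is already within `R + 1` of `x₀`.
    set t := max (L - (R + 1)) 0 with ht
    have ht0 : 0 ≤ t := le_max_right _ _
    have htL : t ≤ L := max_le (by linarith) hL0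
    have htl : L - (R + 1) ≤ t := le_max_left _ _
    have htn : t ≤ n := max_le (by linarith) (Nat.cast_nonneg n)
    have d1 : dist x₀ (g t) = t := by
      have := hg 0 ⟨le_rfl, hL0⟩ t ⟨ht0, htL⟩
      rwa [hg0, zero_sub, abs_neg, abs_of_nonneg ht0] at this
    have d2 : dist (g t) (γ • x₀) = L - t := by
      have := hg t ⟨ht0, htL⟩ L ⟨hL0, le_rfl⟩
      rwa [hg1, abs_sub_comm, abs_of_nonneg (by linarith)] at this
    obtain ⟨δ, hδ⟩ := hdense (g t)
    obtain ⟨l, hlen, hl, hprod⟩ := ih δ (by linarith [dist_triangle x₀ (g t) (δ • x₀)])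
    refine ⟨l ++ [δ⁻¹ * γ], by simp [hlen], ?_, by simp [hprod]⟩
    intro x hx
    rcases List.mem_append.1 hx with hx | hx
    · exact hl x hx
    · rw [List.mem_singleton.1 hx, ← (hiso δ).dist_eq]
      simp only [smul_smul, mul_inv_cancel_left]
      linarith [dist_triangle (δ • x₀) (g t) (γ • x₀), dist_comm (g t) (δ • x₀)]

/-- **Milnor–Švarc Lemma.** If a group `Γ` acts by isometries, properly and coboundedly, on a
nonempty geodesic metric space `X`, then `Γ` is finitely generated and, for every basepoint
`x₀ ∈ X`, the orbit map `γ ↦ γ • x₀` is a quasi-isometry from `Γ` (with a word metric coming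
from a finite generating set) to `X`. -/
theorem milnor_svarc {Γ : Type*} [Group Γ] {X : Type*} [MetricSpace X] [Nonempty X]
    [MulAction Γ X]
    (hiso : ∀ γ : Γ, Isometry (fun x : X => γ • x))
    (hgeodesic : ∀ x y : X, ∃ γ : ℝ → X, γ 0 = x ∧ γ (dist x y) = y ∧
      ∀ s ∈ Set.Icc (0 : ℝ) (dist x y), ∀ t ∈ Set.Icc (0 : ℝ) (dist x y),
        dist (γ s) (γ t) = |s - t|)
    (hproper : ∀ K : Set X, Bornology.IsBounded K →
      {γ : Γ | (((fun x => γ • x) '' K) ∩ K).Nonempty}.Finite)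
    (hcobounded : ∃ r > (0 : ℝ), ∃ x₀ : X, ∀ x : X, ∃ γ : Γ, dist x (γ • x₀) ≤ r) :
    (∃ S : Finset Γ, Subgroup.closure (S : Set Γ) = ⊤) ∧
    ∀ x₀ : X, ∃ S : Finset Γ, Subgroup.closure (S : Set Γ) = ⊤ ∧
      ∃ k ≥ (1 : ℝ), ∃ c ≥ (0 : ℝ), ∃ r ≥ (0 : ℝ),
        (∀ γ₁ γ₂ : Γ,
          wordDist (S : Set Γ) γ₁ γ₂ / k - c ≤ dist (γ₁ • x₀) (γ₂ • x₀) ∧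
          dist (γ₁ • x₀) (γ₂ • x₀) ≤ k * wordDist (S : Set Γ) γ₁ γ₂ + c) ∧
        (∀ x : X, ∃ γ : Γ, dist x (γ • x₀) ≤ r) := by
  suffices h : ∀ x₀ : X, ∃ S : Finset Γ, Subgroup.closure (S : Set Γ) = ⊤ ∧
      ∃ k ≥ (1 : ℝ), ∃ c ≥ (0 : ℝ), ∃ r ≥ (0 : ℝ),
        (∀ γ₁ γ₂ : Γ,
          wordDist (S : Set Γ) γ₁ γ₂ / k - c ≤ dist (γ₁ • x₀) (γ₂ • x₀) ∧
          dist (γ₁ • x₀) (γ₂ • x₀) ≤ k * wordDist (S : Set Γ) γ₁ γ₂ + c) ∧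
        (∀ x : X, ∃ γ : Γ, dist x (γ • x₀) ≤ r) by
    obtain ⟨S, hS, -⟩ := h (Classical.arbitrary X)
    exact ⟨⟨S, hS⟩, h⟩
  intro x₀
  obtain ⟨R, hR, hdense⟩ : ∃ R > (0 : ℝ), ∀ x : X, ∃ γ : Γ, dist x (γ • x₀) ≤ R := by
    obtain ⟨r, hr, y, hy⟩ := hcobounded
    refine ⟨r + dist y x₀, add_pos_of_pos_of_nonneg hr dist_nonneg, fun x => ?_⟩
    obtain ⟨γ, hγ⟩ := hy x
    have h1 : dist (γ • y) (γ • x₀) = dist y x₀ := (hiso γ).dist_eq _ _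
    exact ⟨γ, by linarith [dist_triangle x (γ • y) (γ • x₀)]⟩
  have hfin : {γ : Γ | dist x₀ (γ • x₀) ≤ 2 * R + 1}.Finite := by
    refine (hproper (Metric.closedBall x₀ (2 * R + 1)) Metric.isBounded_closedBall).subset ?_
    intro γ hγ
    refine ⟨γ • x₀, ⟨x₀, Metric.mem_closedBall_self (by linarith), rfl⟩, ?_⟩
    rw [Metric.mem_closedBall, dist_comm]
    exact hγ
  have hmem : ∀ γ : Γ, γ ∈ (hfin.toFinset : Set Γ) ↔ dist x₀ (γ • x₀) ≤ 2 * R + 1 := by simp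
  have hword : ∀ γ : Γ, ∃ l : List Γ, (l.length : ℝ) ≤ dist x₀ (γ • x₀) + 2 ∧
      (∀ x ∈ l, x ∈ (hfin.toFinset : Set Γ)) ∧ l.prod = γ := by
    intro γ
    obtain ⟨l, hlen, hl, hprod⟩ := exists_word hiso hgeodesic x₀ hR hdense
      ⌈dist x₀ (γ • x₀)⌉₊ γ (by linarith [Nat.le_ceil (dist x₀ (γ • x₀))])
    refine ⟨l, ?_, fun x hx => (hmem x).2 (hl x hx), hprod⟩
    rw [hlen]
    push_cast
    linarith [Nat.ceil_lt_add_one (dist_nonneg (x := x₀) (y := γ • x₀))]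
  refine ⟨hfin.toFinset, ?_, 2 * R + 1, by linarith, 2, by norm_num, R, hR.le, ?_, hdense⟩
  · refine (Subgroup.eq_top_iff' _).2 fun γ => ?_
    obtain ⟨l, -, hl, rfl⟩ := hword γ
    exact Subgroup.list_prod_mem _ fun x hx => Subgroup.subset_closure (hl x hx)
  · intro γ₁ γ₂
    have hd : dist (γ₁ • x₀) (γ₂ • x₀) = dist x₀ ((γ₁⁻¹ * γ₂) • x₀) := by
      rw [← (hiso γ₁).dist_eq x₀]
      simp only [smul_smul, mul_inv_cancel_left]
    rw [hd, wordDist]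
    obtain ⟨l, hlen, hl, hprod⟩ := hword (γ₁⁻¹ * γ₂)
    generalize γ₁⁻¹ * γ₂ = γ at *
    subst hprod
    have hl' : ∀ x ∈ l, x ∈ (hfin.toFinset : Set Γ) ∨ x⁻¹ ∈ (hfin.toFinset : Set Γ) :=
      fun x hx => Or.inl (hl x hx)
    constructor
    · have h1 : (wordLength (hfin.toFinset : Set Γ) l.prod : ℝ) ≤ l.length :=
        mod_cast wordLength_le l hl'
      have h2 := div_le_self (Nat.cast_nonneg (α := ℝ)
        (wordLength (hfin.toFinset : Set Γ) l.prod)) (by linarith : 1 ≤ 2 * R + 1)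
      linarith
    · obtain ⟨m, hm, hmS, hmp⟩ := exists_word_length_eq l hl'
      have h1 := dist_prod_smul_le hiso x₀ (2 * R + 1) m fun x hx => by
        rcases hmS x hx with h | h
        · exact (hmem x).1 h
        · have h2 := (hmem _).1 h
          rw [← (hiso x).dist_eq] at h2
          simp only [smul_inv_smul] at h2
          rwa [dist_comm]
      rw [hmp, hm] at h1
      linarith
end

section
/- There is no quasi-isometric embedding of a Euclidean half-space into a lower-dimensional Euclidean space: for integers 1 ≤ l < m, let H = {x ∈ ℝ^m : x₁ ≥ 0} be the closed half-space of Euclidean m-space with the induced Euclidean metric. Then for no k ≥ 1, c ≥ 0 does there exist a (k,c)-quasi-isometric embedding f : H → ℝ^l (with ℝ^l carrying the Euclidean metric). -/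
/-!
Counting argument. Let `s = k (c + 1)`. The points of the grid `s • {0, …, N - 1}^m` lie in the
half-space and are pairwise at distance at least `s`, so their images are pairwise at distance at
least `s / k - c = 1`; moreover the images lie in a ball whose radius is linear in `N`. Cutting
`ℝ^l` into cubes of side `1 / l` (whose points are at mutual distance `< 1`), the pigeonhole
principle gives `N ^ m ≤ E * N ^ l` with `E` independent of `N`, which fails for `N = E + 1`
because `l < m`.
-/

/-- `f` is a `(k,c)`-quasi-isometric embedding with respect to the distance functions
`dX`, `dY`. -/
def QIEmbOn {X Y : Type*} (dX : X → X → ℝ) (dY : Y → Y → ℝ) (k c : ℝ) (f : X → Y) : Prop :=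
  ∀ p q : X, dX p q / k - c ≤ dY (f p) (f q) ∧ dY (f p) (f q) ≤ k * dX p q + c

/-- Two points of `ℝ^l` in the same half-open cube of side `1 / l` are at distance `< 1`. -/
lemma dist_lt_one_of_floor_eq {l : ℕ} (hl : 1 ≤ l) (x y o : EuclideanSpace ℝ (Fin l))
    (h : ∀ i, ⌊(x i - o i) * l⌋ = ⌊(y i - o i) * l⌋) : dist x y < 1 := by
  have hl' : (1 : ℝ) ≤ l := by exact_mod_cast hl
  have hl0 : (0 : ℝ) < l := by linarith
  have hc : ∀ i, dist (x i) (y i) ^ 2 < (1 / l : ℝ) ^ 2 := by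
    intro i
    have h1 := Int.abs_sub_lt_one_of_floor_eq_floor (h i)
    rw [← sub_mul, abs_mul, abs_of_pos hl0, sub_sub_sub_cancel_right] at h1
    have h2 : dist (x i) (y i) < 1 / l := by
      rw [Real.dist_eq, lt_div_iff₀ hl0]; exact h1
    exact pow_lt_pow_left₀ h2 dist_nonneg two_ne_zero
  rw [EuclideanSpace.dist_eq, Real.sqrt_lt' one_pos]
  have : Nonempty (Fin l) := ⟨⟨0, hl⟩⟩
  calc ∑ i, dist (x i) (y i) ^ 2 < ∑ _i : Fin l, (1 / l : ℝ) ^ 2 :=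
        Finset.sum_lt_sum_of_nonempty Finset.univ_nonempty (fun i _ => hc i)
    _ = 1 / l := by simp; field_simp
    _ ≤ 1 ^ 2 := by rw [div_le_iff₀ hl0]; linarith

/-- A coordinate difference is bounded by the Euclidean distance. -/
lemma abs_coord_sub_le_dist {n : ℕ} (x y : EuclideanSpace ℝ (Fin n)) (i : Fin n) :
    |x i - y i| ≤ dist x y := by
  rw [dist_eq_norm, ← Real.norm_eq_abs]
  exact PiLp.norm_apply_le (x - y) i

/-- If all coordinate differences are at most `r`, the distance is at most `n * r`. -/
lemma dist_le_card_mul {n : ℕ} (x y : EuclideanSpace ℝ (Fin n)) {r : ℝ} (hr : 0 ≤ r)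
    (h : ∀ i, |x i - y i| ≤ r) : dist x y ≤ n * r := by
  rw [EuclideanSpace.dist_eq]
  apply Real.sqrt_le_iff.mpr ⟨by positivity, ?_⟩
  calc ∑ i, dist (x i) (y i) ^ 2 ≤ ∑ _i : Fin n, r ^ 2 :=
        Finset.sum_le_sum fun i _ => pow_le_pow_left₀ dist_nonneg (h i) 2
    _ = n * r ^ 2 := by simp
    _ ≤ (n * r) ^ 2 := by
      rw [mul_pow]
      have : (n : ℝ) ≤ (n : ℝ) ^ 2 := by exact_mod_cast Nat.le_self_pow two_ne_zero n
      gcongr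

/-- There is no quasi-isometric embedding of a closed Euclidean half-space of dimension `m`
into Euclidean `l`-space when `1 ≤ l < m`. -/
theorem no_qie_halfspace_to_lower_dim (m l : ℕ) (hl : 1 ≤ l) (hm : l < m) :
    ¬ ∃ (k c : ℝ), 1 ≤ k ∧ 0 ≤ c ∧
      ∃ f : {x : EuclideanSpace ℝ (Fin m) // 0 ≤ x ⟨0, by omega⟩} →
          EuclideanSpace ℝ (Fin l),
        QIEmbOn dist dist k c f := by
  rintro ⟨k, c, hk, hc, f, hf⟩
  have hk0 : 0 < k := by linarith
  obtain ⟨s, hs⟩ : ∃ s, s = k * (c + 1) := ⟨_, rfl⟩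
  have hs0 : 0 < s := by rw [hs]; positivity
  obtain ⟨D, hD⟩ := exists_nat_ge ((k * (m * s) + c) * l)
  obtain ⟨E, hE⟩ : ∃ E : ℕ, E = (2 * D + 1) ^ l := ⟨_, rfl⟩
  obtain ⟨N, hN⟩ : ∃ N : ℕ, N = E + 1 := ⟨_, rfl⟩
  have hN1 : 1 ≤ N := by omega
  have hN1' : (1 : ℝ) ≤ N := by exact_mod_cast hN1
  let p : (Fin m → Fin N) → {x : EuclideanSpace ℝ (Fin m) // 0 ≤ x ⟨0, by omega⟩} :=
    fun a => ⟨WithLp.toLp 2 fun i => s * ((a i : ℕ) : ℝ), by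
      change 0 ≤ s * _
      positivity⟩
  have hp : ∀ a i, (p a).1 i = s * ((a i : ℕ) : ℝ) := fun a i => rfl
  have hsep : ∀ a b, a ≠ b → 1 ≤ dist (f (p a)) (f (p b)) := by
    intro a b hab
    obtain ⟨i, hi⟩ := Function.ne_iff.mp hab
    have h1 : s ≤ dist (p a) (p b) := by
      refine le_trans ?_ (abs_coord_sub_le_dist (p a).1 (p b).1 i)
      rw [hp, hp, ← mul_sub, abs_mul, abs_of_pos hs0]
      have h2 : (1 : ℝ) ≤ |((a i : ℕ) : ℝ) - ((b i : ℕ) : ℝ)| := by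
        have : (1 : ℤ) ≤ |((a i : ℕ) : ℤ) - ((b i : ℕ) : ℤ)| := by
          apply Int.one_le_abs
          have := Fin.val_ne_of_ne hi
          omega
        exact_mod_cast this
      nlinarith
    have h3 : c + 1 ≤ dist (p a) (p b) / k := by
      rw [le_div_iff₀ hk0]; linarith
    linarith [(hf (p a) (p b)).1]
  let a₀ : Fin m → Fin N := fun _ => ⟨0, hN1⟩
  have hbd : ∀ a i, |(f (p a) i - f (p a₀) i) * l| ≤ ((D * N : ℕ) : ℝ) := by
    intro a i
    have h1 : dist (p a) (p a₀) ≤ m * (s * N) := by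
      refine dist_le_card_mul (p a).1 (p a₀).1 (by positivity) fun j => ?_
      have h2 : ((a j : ℕ) : ℝ) ≤ N := by exact_mod_cast (a j).2.le
      rw [hp, hp]
      simp only [a₀, Nat.cast_zero, mul_zero, sub_zero]
      rw [abs_of_nonneg (by positivity)]
      gcongr
    have h3 := abs_coord_sub_le_dist (f (p a)) (f (p a₀)) i
    have h4 := (hf (p a) (p a₀)).2
    rw [abs_mul, Nat.abs_cast]
    calc |f (p a) i - f (p a₀) i| * l ≤ (k * (m * (s * N)) + c * N) * l := by
          gcongr
          refine h3.trans (h4.trans ?_)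
          gcongr
          nlinarith
      _ = (k * (m * s) + c) * l * N := by ring
      _ ≤ D * N := by gcongr
      _ = ((D * N : ℕ) : ℝ) := by push_cast; rfl
  -- The cube containing the image of a grid point, indexed relative to the image of the origin.
  let g : (Fin m → Fin N) → (Fin l → Finset.Icc (-((D * N : ℕ) : ℤ)) ((D * N : ℕ) : ℤ)) :=
    fun a i => ⟨⌊(f (p a) i - f (p a₀) i) * l⌋, by
      have := abs_le.mp (hbd a i)
      rw [Finset.mem_Icc]
      constructor
      · apply Int.le_floor.mpr
        rw [Int.cast_neg, Int.cast_natCast]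
        exact this.1
      · have h := (Int.floor_le ((f (p a) i - f (p a₀) i) * l)).trans this.2
        rw [← Int.cast_natCast] at h
        exact Int.cast_le.mp h⟩
  have hg : Function.Injective g := by
    intro a b hab
    by_contra hne
    refine absurd (hsep a b hne) (not_le.mpr ?_)
    exact dist_lt_one_of_floor_eq hl _ _ (f (p a₀)) fun i =>
      congrArg Subtype.val (congrFun hab i)
  have hcard := Fintype.card_le_of_injective g hg
  simp only [Fintype.card_fun, Fintype.card_fin, Fintype.card_coe, Int.card_Icc] at hcard
  have h5 : (((D * N : ℕ) : ℤ) + 1 - -((D * N : ℕ) : ℤ)).toNat = 2 * (D * N) + 1 := by omega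
  rw [h5] at hcard
  have h6 : N ^ m ≤ E * N ^ l := by
    refine hcard.trans ?_
    rw [hE, ← mul_pow]
    apply Nat.pow_le_pow_left
    nlinarith
  have h7 : N * N ^ l ≤ N ^ m := by
    rw [← pow_succ']
    exact Nat.pow_le_pow_right hN1 hm
  have h8 := Nat.le_of_mul_le_mul_right (h7.trans h6) (pow_pos hN1 l)
  omega
end

section
/- Complements of thin closed sets in Euclidean space are Lipschitz-path-connected: let m, l be integers with m ≥ l + 2 and l ≥ 0, let A ⊆ ℝ^m be a closed subset, and suppose there exist a subset B ⊆ ℝ^l, a constant k ≥ 1, and a bijection φ : A → B with (1/k)·d(x,y) ≤ d(φ(x),φ(y)) ≤ k·d(x,y) for all x,y ∈ A. Then any two points of ℝ^m ∖ A can be joined by a Lipschitz path whose image is contained in ℝ^m ∖ A. -/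
/-!
A generic intermediate point `z` works: the broken line from `p` to `z` to `q` avoids `A`.

If the segment from a point `p ∉ A` to `z` meets `A` at `a`, then `z = p + s • (a - p)` for some
real `s`, so `z` lies on the cone over `A` with apex `p`. The inverse of `φ` is Lipschitz on `B` and
extends to a Lipschitz map `g : ℝ^l → ℝ^m` whose range contains `A`. The cone is therefore contained
in the image of `ℝ × ℝ^l` under the locally Lipschitz map `(s, y) ↦ p + s • (g y - p)`, and has
Hausdorff dimension at most `l + 1 < m` (`dimH_cone_le`). Hence the cones with apexes `p` and `q`
together do not cover `ℝ^m`, and any `z` outside both of them will do.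
-/

/-- The cone with apex `p` over the range of a Lipschitz map from `ℝ^l`, consisting of whole lines
through `p`, has Hausdorff dimension at most `l + 1`. -/
lemma dimH_cone_le {m l : ℕ} {K : NNReal}
    {g : EuclideanSpace ℝ (Fin l) → EuclideanSpace ℝ (Fin m)} (hg : LipschitzWith K g)
    (p : EuclideanSpace ℝ (Fin m)) :
    dimH (Set.range fun x : ℝ × EuclideanSpace ℝ (Fin l) => p + x.1 • (g x.2 - p)) ≤
      ((l + 1 : ℕ) : ENNReal) := by
  have h := dimH_range_le_of_locally_lipschitzOn
    (f := fun x : ℝ × EuclideanSpace ℝ (Fin l) => p + x.1 • (g x.2 - p)) ?_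
  · refine h.trans (le_of_eq ?_)
    rw [Real.dimH_univ_eq_finrank]
    simp [Module.finrank_prod, add_comm]
  · rintro ⟨s₀, y₀⟩
    set M : NNReal := ‖g y₀ - p‖₊ + K with hM
    set R : NNReal := ‖s₀‖₊ + 1 with hR
    refine ⟨M + R * K, Metric.ball (s₀, y₀) 1, Metric.ball_mem_nhds _ one_pos, ?_⟩
    refine LipschitzOnWith.of_dist_le_mul ?_
    rintro ⟨s, y⟩ hx ⟨s', y'⟩ hx'
    rw [Metric.mem_ball, Prod.dist_eq, max_lt_iff] at hx hx'
    have hs : |s - s'| ≤ dist (s, y) (s', y') := by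
      rw [Prod.dist_eq, ← Real.dist_eq]; exact le_max_left _ _
    have hy : dist y y' ≤ dist (s, y) (s', y') := by
      rw [Prod.dist_eq]; exact le_max_right _ _
    have h1 : ‖g y - p‖ ≤ M := by
      have e : g y - p = (g y₀ - p) + (g y - g y₀) := by abel
      have := hg.dist_le_mul y y₀
      rw [dist_eq_norm] at this
      have h3 : (K : ℝ) * dist y y₀ ≤ K := mul_le_of_le_one_right K.2 hx.2.le
      rw [e]
      refine (norm_add_le _ _).trans ?_
      simp only [hM, NNReal.coe_add, coe_nnnorm]
      linarith
    have h2 : |s'| ≤ R := by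
      have h3 : |s'| ≤ |s₀| + |s' - s₀| := by
        simpa using abs_add_le s₀ (s' - s₀)
      have h4 := hx'.1
      simp only [Real.dist_eq] at h4
      simp only [hR, NNReal.coe_add, coe_nnnorm, NNReal.coe_one, Real.norm_eq_abs]
      linarith
    have e : (p + s • (g y - p)) - (p + s' • (g y' - p)) =
        (s - s') • (g y - p) + s' • (g y - g y') := by module
    have h5 := hg.dist_le_mul y y'
    rw [dist_eq_norm] at h5
    calc dist (p + s • (g y - p)) (p + s' • (g y' - p))
        = ‖(s - s') • (g y - p) + s' • (g y - g y')‖ := by rw [dist_eq_norm, e]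
      _ ≤ |s - s'| * ‖g y - p‖ + |s'| * ‖g y - g y'‖ := by
          refine (norm_add_le _ _).trans (le_of_eq ?_)
          simp [norm_smul]
      _ ≤ dist (s, y) (s', y') * M + R * (K * dist (s, y) (s', y')) := by
          gcongr
          exact h5.trans (by gcongr)
      _ = _ := by push_cast; ring

/-- If `z` is off the cone with apex `p ∉ A` over `Set.range g ⊇ A`, then the whole line
through `p` and `z` avoids `A`. -/
lemma segment_notMem_of_notMem_cone {E F : Type*} [AddCommGroup E] [Module ℝ E]
    {A : Set E} {g : F → E} (hgA : A ⊆ Set.range g) {p z : E} (hp : p ∉ A)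
    (hz : z ∉ Set.range fun x : ℝ × F => p + x.1 • (g x.2 - p)) (t : ℝ) :
    p + t • (z - p) ∉ A := by
  intro ha
  obtain ⟨b, hb⟩ := hgA ha
  by_cases ht : t = 0
  · apply hp
    simpa [ht] using ha
  · refine hz ⟨(t⁻¹, b), ?_⟩
    simp [hb, smul_smul, inv_mul_cancel₀ ht]


/-- Complements of thin closed sets in Euclidean space are Lipschitz-path-connected: if a
closed set `A ⊆ ℝ^m` is bi-Lipschitz equivalent to a subset of `ℝ^l` with `m ≥ l + 2`, then
any two points of `ℝ^m ∖ A` are joined by a Lipschitz path avoiding `A`. -/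
theorem complement_of_thin_closed_set_lipschitz_path_connected
    (m l : ℕ) (hml : l + 2 ≤ m)
    (A : Set (EuclideanSpace ℝ (Fin m))) (hA : IsClosed A)
    (B : Set (EuclideanSpace ℝ (Fin l)))
    (φ : EuclideanSpace ℝ (Fin m) → EuclideanSpace ℝ (Fin l))
    (hbij : Set.BijOn φ A B)
    (k : ℝ) (hk : 1 ≤ k)
    (hlip : ∀ x ∈ A, ∀ y ∈ A,
      (1 / k) * dist x y ≤ dist (φ x) (φ y) ∧ dist (φ x) (φ y) ≤ k * dist x y) :
    ∀ p ∈ Aᶜ, ∀ q ∈ Aᶜ, ∃ γ : ℝ → EuclideanSpace ℝ (Fin m),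
      γ 0 = p ∧ γ 1 = q ∧
      (∀ t ∈ Set.Icc (0 : ℝ) 1, γ t ∉ A) ∧
      (∃ C : ℝ, ∀ s ∈ Set.Icc (0 : ℝ) 1, ∀ t ∈ Set.Icc (0 : ℝ) 1,
        dist (γ s) (γ t) ≤ C * |s - t|) := by
  intro p hp q hq
  have hk0 : 0 < k := by linarith
  obtain ⟨g, hg, hgA⟩ : ∃ g : EuclideanSpace ℝ (Fin l) → EuclideanSpace ℝ (Fin m),
      (∃ K, LipschitzWith K g) ∧ A ⊆ Set.range g := by
    have hL : LipschitzOnWith k.toNNReal (Function.invFunOn φ A) B := by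
      refine LipschitzOnWith.of_dist_le_mul fun x hx y hy => ?_
      have hinv := hbij.surjOn.rightInvOn_invFunOn
      have h := (hlip _ (hbij.surjOn.mapsTo_invFunOn hx) _ (hbij.surjOn.mapsTo_invFunOn hy)).1
      rw [hinv hx, hinv hy, one_div, inv_mul_le_iff₀ hk0] at h
      rwa [Real.coe_toNNReal _ hk0.le]
    obtain ⟨g, hg, hgB⟩ := hL.extend_finite_dimension
    refine ⟨g, ⟨_, hg⟩, fun a ha => ⟨φ a, ?_⟩⟩
    rw [← hgB (hbij.mapsTo ha)]
    exact hbij.injOn.leftInvOn_invFunOn ha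
  obtain ⟨K, hg⟩ := hg
  obtain ⟨z, hz⟩ : ∃ z, z ∉
      (Set.range fun x : ℝ × EuclideanSpace ℝ (Fin l) => p + x.1 • (g x.2 - p)) ∪
      (Set.range fun x : ℝ × EuclideanSpace ℝ (Fin l) => q + x.1 • (g x.2 - q)) := by
    refine (dense_compl_of_dimH_lt_finrank ?_).nonempty
    rw [dimH_union]
    refine (max_le (dimH_cone_le hg p) (dimH_cone_le hg q)).trans_lt ?_
    rw [finrank_euclideanSpace_fin]
    exact_mod_cast (by omega : l + 1 < m)
  rw [Set.mem_union, not_or] at hz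
  have hpz := segment_notMem_of_notMem_cone hgA hp hz.1
  have hqz := segment_notMem_of_notMem_cone hgA hq hz.2
  -- The first summand traverses `[p, z]` for `t ≤ 1/2`, the second `[z, q]` for `t ≥ 1/2`.
  refine ⟨fun t => p + min (2 * t) 1 • (z - p) + max (2 * t - 1) 0 • (q - z), ?_, ?_, ?_, ?_⟩
  · simp
  · norm_num
  · intro t _
    rcases le_total (2 * t) 1 with h | h
    · simpa only [min_eq_left h, max_eq_right (sub_nonpos.2 h), zero_smul, add_zero] using hpz _
    · have e : p + (1 : ℝ) • (z - p) + (2 * t - 1) • (q - z) =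
          q + (2 - 2 * t) • (z - q) := by module
      simpa only [min_eq_right h, max_eq_left (sub_nonneg.2 h), e] using hqz (2 - 2 * t)
  · refine ⟨2 * ‖z - p‖ + 2 * ‖q - z‖, fun s _ t _ => ?_⟩
    have h1 : |min (2 * s) 1 - min (2 * t) 1| ≤ 2 * |s - t| := by
      refine (abs_min_sub_min_le_max _ _ _ _).trans ?_
      simp [← mul_sub, abs_mul]
    have h2 : |max (2 * s - 1) 0 - max (2 * t - 1) 0| ≤ 2 * |s - t| := by
      refine (abs_max_sub_max_le_max _ _ _ _).trans ?_
      simp [← mul_sub, abs_mul]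
    have e : (p + min (2 * s) 1 • (z - p) + max (2 * s - 1) 0 • (q - z)) -
        (p + min (2 * t) 1 • (z - p) + max (2 * t - 1) 0 • (q - z)) =
        (min (2 * s) 1 - min (2 * t) 1) • (z - p) +
        (max (2 * s - 1) 0 - max (2 * t - 1) 0) • (q - z) := by module
    rw [dist_eq_norm, e]
    refine (norm_add_le _ _).trans ?_
    rw [norm_smul, norm_smul, Real.norm_eq_abs, Real.norm_eq_abs]
    calc _ ≤ 2 * |s - t| * ‖z - p‖ + 2 * |s - t| * ‖q - z‖ := by gcongr
      _ = _ := by ring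
end

section
/- A tree-graded space whose pieces are real trees is itself a real tree: let Y be a geodesic metric space which is tree-graded with respect to a collection P of closed subsets, and suppose that each piece P ∈ P, endowed with the metric induced from Y, is a real tree. Then Y is a real tree. -/
/-!
A piece that is a real tree contains no nondegenerate simple geodesic triangle: a side of such a
triangle is covered by the other two, which meet it only in its endpoints. So every simple geodesic
triangle of `Y` is constant (`eq_of_arcs_meet_in_vertices`).

Given a triangle with vertices `a, b, c` and sides `A, B, D`, cut it down to one whose sides meet
only in vertices: take `m ∈ A ∩ D` farthest from `a`, then `n ∈ A ∩ B` between `m` and `b` farthest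
from `b`, then `k ∈ B ∩ D` beyond `n` and `m` farthest from `c`. The triangle `m, n, k` is simple,
hence constant, so the three sides have a common point (`exists_median`).

Applied to a point `z` with `d(x,z) + d(z,y) = d(x,y)` and the triangle `x, y, z`, this shows that
`z` lies on every geodesic from `x` to `y`: geodesic sides coincide with metric intervals
(`Arc.mem_of_between`). A median of `a, b, c` splits each side into two subintervals, each contained
in the metric interval of another side, which is 0-hyperbolicity.
-/

/-- `γ` is a geodesic from `x` to `y`: an isometric embedding of `[0, dist x y]` sending the
endpoints to `x` and `y`. -/
def IsGeodesicParam {X : Type*} [MetricSpace X] (γ : ℝ → X) (x y : X) : Prop :=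
  γ 0 = x ∧ γ (dist x y) = y ∧
    ∀ s ∈ Set.Icc (0 : ℝ) (dist x y), ∀ t ∈ Set.Icc (0 : ℝ) (dist x y),
      dist (γ s) (γ t) = |s - t|

/-- A geodesic metric space: any two points are joined by a geodesic. -/
def IsGeodesicSpace (X : Type*) [MetricSpace X] : Prop :=
  ∀ x y : X, ∃ γ : ℝ → X, IsGeodesicParam γ x y

/-- The side of a triangle determined by the geodesic `γ` from `x` to `y`. -/
def geodSide {X : Type*} [MetricSpace X] (γ : ℝ → X) (x y : X) : Set X :=
  γ '' Set.Icc (0 : ℝ) (dist x y)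

/-- The loop obtained by concatenating the three sides of a geodesic triangle with vertices
`a`, `b`, `c` and sides `α` (from `a` to `b`), `β` (from `b` to `c`), `δ` (from `c` to `a`). -/
noncomputable def triangleLoop {X : Type*} [MetricSpace X] (α β δ : ℝ → X) (a b c : X) :
    ℝ → X := fun t =>
  if t ≤ dist a b then α t
  else if t ≤ dist a b + dist b c then β (t - dist a b)
  else δ (t - (dist a b + dist b c))

/-- A geodesic triangle is simple if the loop obtained by concatenating its three sides is
injective except at its endpoints. -/
def IsSimpleTriangle {X : Type*} [MetricSpace X] (α β δ : ℝ → X) (a b c : X) : Prop :=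
  ∀ s ∈ Set.Ico (0 : ℝ) (dist a b + dist b c + dist c a),
    ∀ t ∈ Set.Ico (0 : ℝ) (dist a b + dist b c + dist c a),
      triangleLoop α β δ a b c s = triangleLoop α β δ a b c t → s = t

/-- A real tree: a geodesic metric space that is 0-hyperbolic, i.e. in every geodesic
triangle each side is contained in the union of the other two. -/
def IsRealTree (X : Type*) [MetricSpace X] : Prop :=
  IsGeodesicSpace X ∧
  ∀ (a b c : X) (α β δ : ℝ → X),
    IsGeodesicParam α a b → IsGeodesicParam β b c → IsGeodesicParam δ c a →
      geodSide α a b ⊆ geodSide β b c ∪ geodSide δ c a ∧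
      geodSide β b c ⊆ geodSide α a b ∪ geodSide δ c a ∧
      geodSide δ c a ⊆ geodSide α a b ∪ geodSide β b c

/-- `S` is the image of a geodesic from `x` to `y`. -/
def Arc {X : Type*} [MetricSpace X] (S : Set X) (x y : X) : Prop :=
  ∃ γ : ℝ → X, IsGeodesicParam γ x y ∧ geodSide γ x y = S

/-! ### Arcs, subarcs and simple triangles -/

section Arcs

variable {X : Type*} [MetricSpace X]

theorem IsGeodesicParam.inj {γ : ℝ → X} {x y : X} (h : IsGeodesicParam γ x y) {s t : ℝ}
    (hs : s ∈ Set.Icc (0 : ℝ) (dist x y)) (ht : t ∈ Set.Icc (0 : ℝ) (dist x y))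
    (e : γ s = γ t) : s = t := by
  have := h.2.2 s hs t ht
  rw [e, dist_self] at this
  exact sub_eq_zero.1 (abs_eq_zero.1 this.symm)

theorem IsGeodesicParam.dist_left {γ : ℝ → X} {x y : X} (h : IsGeodesicParam γ x y) {t : ℝ}
    (ht : t ∈ Set.Icc (0 : ℝ) (dist x y)) : dist x (γ t) = t := by
  have := h.2.2 0 ⟨le_rfl, dist_nonneg⟩ t ht
  rwa [h.1, zero_sub, abs_neg, abs_of_nonneg ht.1] at this

theorem IsGeodesicParam.dist_right {γ : ℝ → X} {x y : X} (h : IsGeodesicParam γ x y) {t : ℝ}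
    (ht : t ∈ Set.Icc (0 : ℝ) (dist x y)) : dist (γ t) y = dist x y - t := by
  have := h.2.2 t ht (dist x y) ⟨dist_nonneg, le_rfl⟩
  rwa [h.2.1, abs_sub_comm, abs_of_nonneg (by linarith [ht.2])] at this

theorem Arc.left_mem {S : Set X} {x y : X} (h : Arc S x y) : x ∈ S := by
  obtain ⟨γ, h, rfl⟩ := h
  exact ⟨0, ⟨le_rfl, dist_nonneg⟩, h.1⟩

theorem Arc.right_mem {S : Set X} {x y : X} (h : Arc S x y) : y ∈ S := by
  obtain ⟨γ, h, rfl⟩ := h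
  exact ⟨dist x y, ⟨dist_nonneg, le_rfl⟩, h.2.1⟩

theorem Arc.between {S : Set X} {x y z : X} (h : Arc S x y) (hz : z ∈ S) :
    dist x z + dist z y = dist x y := by
  obtain ⟨γ, h, rfl⟩ := h
  obtain ⟨t, ht, rfl⟩ := hz
  rw [h.dist_left ht, h.dist_right ht]; ring

theorem Arc.isCompact {S : Set X} {x y : X} (h : Arc S x y) : IsCompact S := by
  obtain ⟨γ, h, rfl⟩ := h
  refine isCompact_Icc.image_of_continuousOn ?_
  refine LipschitzOnWith.continuousOn (K := 1) (LipschitzOnWith.of_dist_le_mul ?_)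
  intro s hs t ht
  rw [h.2.2 s hs t ht, NNReal.coe_one, one_mul, Real.dist_eq]

theorem Arc.symm {S : Set X} {x y : X} (h : Arc S x y) : Arc S y x := by
  obtain ⟨γ, h, rfl⟩ := h
  refine ⟨fun t => γ (dist x y - t), ⟨by simpa using h.2.1, by simpa [dist_comm] using h.1, ?_⟩, ?_⟩
  · rw [dist_comm y x]
    intro s hs t ht
    rw [h.2.2 _ ⟨by linarith [hs.2], by linarith [hs.1]⟩ _ ⟨by linarith [ht.2], by linarith [ht.1]⟩,
      abs_sub_comm]
    congr 1; ring
  · unfold geodSide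
    rw [dist_comm y x]
    ext z
    constructor
    · rintro ⟨t, ht, rfl⟩
      exact ⟨_, ⟨by linarith [ht.2], by linarith [ht.1]⟩, rfl⟩
    · rintro ⟨t, ht, rfl⟩
      exact ⟨dist x y - t, ⟨by linarith [ht.2], by linarith [ht.1]⟩, by simp⟩

theorem Arc.exists_sub {S : Set X} {x y p : X} (h : Arc S x y) (hp : p ∈ S) :
    ∃ T ⊆ S, Arc T p y := by
  obtain ⟨γ, h, rfl⟩ := h
  obtain ⟨u, hu, rfl⟩ := hp
  have hd := h.dist_right hu
  refine ⟨_, ?_, fun t => γ (u + t), ⟨by simp, by simp [hd, h.2.1], ?_⟩, rfl⟩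
  · rintro _ ⟨t, ht, rfl⟩
    rw [hd] at ht
    exact ⟨u + t, ⟨by linarith [ht.1, hu.1], by linarith [ht.2]⟩, rfl⟩
  · rw [hd]
    intro s hs t ht
    rw [h.2.2 _ ⟨by linarith [hs.1, hu.1], by linarith [hs.2]⟩ _
      ⟨by linarith [ht.1, hu.1], by linarith [ht.2]⟩]
    congr 1; ring

theorem Arc.exists_interior {S : Set X} {x y : X} (h : Arc S x y) (hxy : x ≠ y) :
    ∃ z ∈ S, z ≠ x ∧ z ≠ y := by
  obtain ⟨γ, h, rfl⟩ := h
  have hpos := dist_pos.2 hxy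
  have hm : dist x y / 2 ∈ Set.Icc (0 : ℝ) (dist x y) := ⟨by linarith, by linarith⟩
  refine ⟨_, ⟨_, hm, rfl⟩, fun e => ?_, fun e => ?_⟩
  · have := h.dist_left hm
    rw [e, dist_self] at this; linarith
  · have := h.dist_right hm
    rw [e, dist_self] at this; linarith

/-- Two arcs with a common point `e` contain a common point that is farthest from `e`. -/
theorem Arc.exists_farthest {S T : Set X} {x y x' y' e : X} (hS : Arc S x y) (hT : Arc T x' y')
    (heS : e ∈ S) (heT : e ∈ T) :
    ∃ m ∈ S, m ∈ T ∧ ∀ z ∈ S, z ∈ T → dist e z ≤ dist e m := by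
  obtain ⟨m, hm, hmax⟩ := (hS.isCompact.inter hT.isCompact).exists_isMaxOn ⟨e, heS, heT⟩
    (f := fun z => dist e z) (by fun_prop)
  exact ⟨m, hm.1, hm.2, fun z h1 h2 => hmax ⟨h1, h2⟩⟩

/-- A geodesic contained in a subset `p` is a geodesic of the metric space `p`. -/
theorem IsGeodesicParam.exists_subtype {γ : ℝ → X} {x y : X} (h : IsGeodesicParam γ x y)
    {p : Set X} (hp : geodSide γ x y ⊆ p) (hx : x ∈ p) (hy : y ∈ p) :
    ∃ γ' : ℝ → p, IsGeodesicParam γ' ⟨x, hx⟩ ⟨y, hy⟩ ∧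
      ∀ z : p, z ∈ geodSide γ' ⟨x, hx⟩ ⟨y, hy⟩ ↔ (z : X) ∈ geodSide γ x y := by
  classical
  -- outside `[0, dist x y]` the values of `γ` may leave `p`; there the value `x` is used instead
  let γ' : ℝ → p := fun t => if ht : γ t ∈ p then ⟨γ t, ht⟩ else ⟨x, hx⟩
  have key : ∀ t ∈ Set.Icc (0 : ℝ) (dist x y), (γ' t : X) = γ t := by
    intro t ht
    have : γ t ∈ p := hp ⟨t, ht, rfl⟩
    simp [γ', this]
  refine ⟨γ', ⟨?_, ?_, ?_⟩, fun z => ⟨?_, ?_⟩⟩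
  · exact Subtype.ext ((key 0 ⟨le_rfl, dist_nonneg⟩).trans h.1)
  · exact Subtype.ext ((key (dist x y) ⟨dist_nonneg, le_rfl⟩).trans h.2.1)
  · intro s hs t ht
    rw [Subtype.dist_eq, key s hs, key t ht]
    exact h.2.2 s hs t ht
  · rintro ⟨t, ht, rfl⟩
    exact ⟨t, ht, (key t ht).symm⟩
  · rintro ⟨t, ht, e⟩
    exact ⟨t, ht, Subtype.ext ((key t ht).trans e)⟩

/-- A geodesic triangle is simple if any two of its sides meet only in their common vertex. -/
theorem isSimpleTriangle_of_inter {α β δ : ℝ → X} {a b c : X} (hα : IsGeodesicParam α a b)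
    (hβ : IsGeodesicParam β b c) (hδ : IsGeodesicParam δ c a)
    (hca : ∀ z ∈ geodSide α a b, z ∈ geodSide δ c a → z = a)
    (hab : ∀ z ∈ geodSide α a b, z ∈ geodSide β b c → z = b)
    (hbc : ∀ z ∈ geodSide β b c, z ∈ geodSide δ c a → z = c) :
    IsSimpleTriangle α β δ a b c := by
  -- On `[0, perimeter)` the loop runs through `α` on a closed interval, `β` on a left-open one and
  -- `δ` on an open one: `a` and `b` are counted on `α` only, `c` on `β` only.
  have h12 : ∀ s ∈ Set.Icc (0 : ℝ) (dist a b), ∀ t ∈ Set.Ioc (0 : ℝ) (dist b c), α s ≠ β t := by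
    intro s hs t ht e
    have ht' : t ∈ Set.Icc (0 : ℝ) (dist b c) := ⟨ht.1.le, ht.2⟩
    have := hab _ ⟨s, hs, rfl⟩ ⟨t, ht', e.symm⟩
    have := hβ.inj ht' ⟨le_rfl, dist_nonneg⟩ (e.symm.trans (this.trans hβ.1.symm))
    linarith [ht.1]
  have h13 : ∀ s ∈ Set.Icc (0 : ℝ) (dist a b), ∀ t ∈ Set.Ioo (0 : ℝ) (dist c a), α s ≠ δ t := by
    intro s hs t ht e
    have ht' : t ∈ Set.Icc (0 : ℝ) (dist c a) := ⟨ht.1.le, ht.2.le⟩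
    have := hca _ ⟨s, hs, rfl⟩ ⟨t, ht', e.symm⟩
    have := hδ.inj ht' ⟨dist_nonneg, le_rfl⟩ (e.symm.trans (this.trans hδ.2.1.symm))
    linarith [ht.2]
  have h23 : ∀ s ∈ Set.Ioc (0 : ℝ) (dist b c), ∀ t ∈ Set.Ioo (0 : ℝ) (dist c a), β s ≠ δ t := by
    intro s hs t ht e
    have ht' : t ∈ Set.Icc (0 : ℝ) (dist c a) := ⟨ht.1.le, ht.2.le⟩
    have := hbc _ ⟨s, ⟨hs.1.le, hs.2⟩, rfl⟩ ⟨t, ht', e.symm⟩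
    have := hδ.inj ht' ⟨le_rfl, dist_nonneg⟩ (e.symm.trans (this.trans hδ.1.symm))
    linarith [ht.1]
  rintro s ⟨hs0, hs1⟩ t ⟨ht0, ht1⟩ e
  unfold triangleLoop at e
  split_ifs at e with h1 h2 h3 h4 h5 h6 h7 h8
  all_goals (try simp only [not_le] at *)
  · exact hα.inj ⟨hs0, h1⟩ ⟨ht0, h2⟩ e
  · exact (h12 _ ⟨hs0, h1⟩ _ ⟨by linarith, by linarith⟩ e).elim
  · exact (h13 _ ⟨hs0, h1⟩ _ ⟨by linarith, by linarith⟩ e).elim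
  · exact (h12 _ ⟨ht0, by assumption⟩ _ ⟨by linarith, by linarith⟩ e.symm).elim
  · linarith [hβ.inj (s := s - dist a b) (t := t - dist a b)
      ⟨by linarith, by linarith⟩ ⟨by linarith, by linarith⟩ e]
  · exact (h23 _ ⟨by linarith, by linarith⟩ _ ⟨by linarith, by linarith⟩ e).elim
  · exact (h13 _ ⟨ht0, by assumption⟩ _ ⟨by linarith, by linarith⟩ e.symm).elim
  · exact (h23 _ ⟨by linarith, by linarith⟩ _ ⟨by linarith, by linarith⟩ e.symm).elim
  · linarith [hδ.inj (s := s - (dist a b + dist b c)) (t := t - (dist a b + dist b c))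
      ⟨by linarith, by linarith⟩ ⟨by linarith, by linarith⟩ e]

end Arcs

/-! ### Medians and metric intervals -/

section Triangles

variable {Y : Type*} [MetricSpace Y]

/-- If simple geodesic triangles lie in real trees, a triangle whose sides meet only in vertices
is constant. -/
theorem eq_of_arcs_meet_in_vertices {P : Set (Set Y)}
    (htriangle : ∀ (a b c : Y) (α β δ : ℝ → Y),
      IsGeodesicParam α a b → IsGeodesicParam β b c → IsGeodesicParam δ c a →
      IsSimpleTriangle α β δ a b c →
      ∃ p ∈ P, geodSide α a b ∪ geodSide β b c ∪ geodSide δ c a ⊆ p)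
    (hpieces : ∀ p ∈ P, IsRealTree p)
    {A B D : Set Y} {a b c : Y} (hA : Arc A a b) (hB : Arc B b c) (hD : Arc D c a)
    (hca : ∀ z ∈ A, z ∈ D → z = a) (hab : ∀ z ∈ A, z ∈ B → z = b)
    (hbc : ∀ z ∈ B, z ∈ D → z = c) : a = b ∧ b = c := by
  have hA' := hA
  have hB' := hB
  obtain ⟨α, hα, rfl⟩ := hA
  obtain ⟨β, hβ, rfl⟩ := hB
  obtain ⟨δ, hδ, rfl⟩ := hD
  obtain ⟨p, hp, hsub⟩ := htriangle a b c α β δ hα hβ hδ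
    (isSimpleTriangle_of_inter hα hβ hδ hca hab hbc)
  have sα : geodSide α a b ⊆ p := fun z hz => hsub (Or.inl (Or.inl hz))
  have sβ : geodSide β b c ⊆ p := fun z hz => hsub (Or.inl (Or.inr hz))
  have sδ : geodSide δ c a ⊆ p := fun z hz => hsub (Or.inr hz)
  have ha : a ∈ p := sα hA'.left_mem
  have hb : b ∈ p := sβ hB'.left_mem
  have hc : c ∈ p := sβ hB'.right_mem
  obtain ⟨α', gα, eα⟩ := hα.exists_subtype sα ha hb
  obtain ⟨β', gβ, eβ⟩ := hβ.exists_subtype sβ hb hc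
  obtain ⟨δ', gδ, eδ⟩ := hδ.exists_subtype sδ hc ha
  obtain ⟨t1, t2, -⟩ := (hpieces p hp).2 _ _ _ α' β' δ' gα gβ gδ
  constructor
  · by_contra hne
    obtain ⟨z, hz, h1, h2⟩ := hA'.exists_interior hne
    rcases t1 ((eα ⟨z, sα hz⟩).2 hz) with h | h
    · exact h2 (hab z hz ((eβ _).1 h))
    · exact h1 (hca z hz ((eδ _).1 h))
  · by_contra hne
    obtain ⟨z, hz, h1, h2⟩ := hB'.exists_interior hne
    rcases t2 ((eβ ⟨z, sβ hz⟩).2 hz) with h | h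
    · exact h1 (hab z ((eα _).1 h) hz)
    · exact h2 (hbc z hz ((eδ _).1 h))

/-- The three sides of a geodesic triangle have a common point, provided that triangles whose
sides meet only in vertices are constant. -/
theorem exists_median
    (hconst : ∀ (A B D : Set Y) (a b c : Y), Arc A a b → Arc B b c → Arc D c a →
      (∀ z ∈ A, z ∈ D → z = a) → (∀ z ∈ A, z ∈ B → z = b) → (∀ z ∈ B, z ∈ D → z = c) →
      a = b ∧ b = c)
    {A B D : Set Y} {a b c : Y} (hA : Arc A a b) (hB : Arc B b c) (hD : Arc D c a) :
    ∃ m ∈ A, m ∈ B ∧ m ∈ D := by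
  obtain ⟨m, hmA, hmD, hm⟩ := hA.exists_farthest hD hA.left_mem hD.right_mem
  obtain ⟨A₁, sA₁, hA₁⟩ := hA.exists_sub hmA
  obtain ⟨D₁, sD₁, hD₁⟩ := hD.symm.exists_sub hmD
  obtain ⟨n, hnA, hnB, hn⟩ := hA₁.exists_farthest hB hA₁.right_mem hB.left_mem
  obtain ⟨A₂, sA₂, hA₂⟩ := hA₁.symm.exists_sub hnA
  obtain ⟨B₁, sB₁, hB₁⟩ := hB.exists_sub hnB
  obtain ⟨k, hkB, hkD, hk⟩ := hB₁.exists_farthest hD₁ hB₁.right_mem hD₁.right_mem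
  obtain ⟨B₂, sB₂, hB₂⟩ := hB₁.symm.exists_sub hkB
  obtain ⟨D₂, sD₂, hD₂⟩ := hD₁.symm.exists_sub hkD
  -- A common point `z` of two sides of `m, n, k` is, along an original side, farther from `a`, `b`
  -- or `c` than the corresponding `m`, `n` or `k`, unless it equals that point.
  obtain ⟨h1, -⟩ := hconst A₂ B₂ D₂ m n k hA₂.symm hB₂.symm hD₂
    (by
      intro z hzA hzD
      have e1 := hm z (sA₁ (sA₂ hzA)) (sD₁ (sD₂ hzD))
      have e2 := hA₁.between (sA₂ hzA)
      have e3 := hA.between hmA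
      have e4 := dist_triangle a z b
      exact (dist_le_zero.1 (by linarith : dist m z ≤ 0)).symm)
    (by
      intro z hzA hzB
      have e1 := hn z (sA₂ hzA) (sB₁ (sB₂ hzB))
      have e2 := hA₂.between hzA
      have e3 := hA₁.symm.between hnA
      have e4 := dist_triangle b z m
      exact (dist_le_zero.1 (by linarith : dist n z ≤ 0)).symm)
    (by
      intro z hzB hzD
      have e1 := hk z (sB₂ hzB) (sD₂ hzD)
      have e2 := hB₂.between hzB
      have e3 := hB₁.symm.between hkB
      have e4 := dist_triangle c z n
      exact (dist_le_zero.1 (by linarith : dist k z ≤ 0)).symm)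
  exact ⟨m, hmA, h1 ▸ hnB, hmD⟩

/-- When geodesic triangles have medians, a geodesic from `x` to `y` fills the whole metric
interval between `x` and `y`: the median of a triangle `x, y, z` with `z` between `x` and `y`
can only be `z`. -/
theorem Arc.mem_of_between (hgeo : IsGeodesicSpace Y)
    (hmed : ∀ (A B D : Set Y) (a b c : Y), Arc A a b → Arc B b c → Arc D c a →
      ∃ m ∈ A, m ∈ B ∧ m ∈ D)
    {S : Set Y} {x y z : Y} (hS : Arc S x y) (hz : dist x z + dist z y = dist x y) : z ∈ S := by
  obtain ⟨β, hβ⟩ := hgeo y z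
  obtain ⟨δ, hδ⟩ := hgeo z x
  have hB : Arc _ y z := ⟨β, hβ, rfl⟩
  have hD : Arc _ z x := ⟨δ, hδ, rfl⟩
  obtain ⟨m, hmS, hmB, hmD⟩ := hmed _ _ _ x y z hS hB hD
  have e1 := hS.between hmS
  have e2 := hB.between hmB
  have e3 := hD.between hmD
  rw [dist_comm y m, dist_comm y z] at e2
  rw [dist_comm m x, dist_comm z x, dist_comm z m] at e3
  have : z = m := (dist_le_zero.1 (by linarith : dist m z ≤ 0)).symm
  exact this ▸ hmS

/-- When geodesic triangles have medians, the side `A` is covered by the other two: the median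
cuts `A` into two intervals, one inside the interval `[b, c]` and one inside `[c, a]`. -/
theorem Arc.subset_union (hgeo : IsGeodesicSpace Y)
    (hmed : ∀ (A B D : Set Y) (a b c : Y), Arc A a b → Arc B b c → Arc D c a →
      ∃ m ∈ A, m ∈ B ∧ m ∈ D)
    {A B D : Set Y} {a b c : Y} (hA : Arc A a b) (hB : Arc B b c) (hD : Arc D c a) :
    A ⊆ B ∪ D := by
  intro x hx
  obtain ⟨m, hmA, hmB, hmD⟩ := hmed _ _ _ a b c hA hB hD
  have eB := hB.between hmB
  have eD := hD.between hmD
  have cut : x ∈ A → (dist a x + dist x m = dist a m ∨ dist b x + dist x m = dist b m) := by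
    intro hx
    obtain ⟨γ, hγ, rfl⟩ := hA
    obtain ⟨s, hs, rfl⟩ := hx
    obtain ⟨t, ht, rfl⟩ := hmA
    rw [hγ.dist_left hs, hγ.dist_left ht, hγ.2.2 s hs t ht, dist_comm b, dist_comm b,
      hγ.dist_right hs, hγ.dist_right ht]
    rcases le_total s t with h | h
    · left; rw [abs_of_nonpos (by linarith)]; ring
    · right; rw [abs_of_nonneg (by linarith)]; ring
  rcases cut hx with h | h
  · right
    refine hD.mem_of_between hgeo hmed (le_antisymm ?_ (dist_triangle _ _ _))
    have := dist_triangle c m x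
    rw [dist_comm x a]
    rw [dist_comm m a] at eD
    rw [dist_comm m x] at this
    linarith
  · left
    refine hB.mem_of_between hgeo hmed (le_antisymm ?_ (dist_triangle _ _ _))
    have := dist_triangle x m c
    linarith

end Triangles

/-- A tree-graded space whose pieces are real trees (with the induced metric) is itself a
real tree. -/
theorem treeGraded_with_realTree_pieces_isRealTree {Y : Type*} [MetricSpace Y]
    (hgeo : IsGeodesicSpace Y) (P : Set (Set Y))
    (hclosed : ∀ p ∈ P, IsClosed p)
    (hcover : ⋃₀ P = Set.univ)
    (hinter : ∀ p ∈ P, ∀ q ∈ P, p ≠ q → Set.Subsingleton (p ∩ q))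
    (htriangle : ∀ (a b c : Y) (α β δ : ℝ → Y),
      IsGeodesicParam α a b → IsGeodesicParam β b c → IsGeodesicParam δ c a →
      IsSimpleTriangle α β δ a b c →
      ∃ p ∈ P, geodSide α a b ∪ geodSide β b c ∪ geodSide δ c a ⊆ p)
    (hpieces : ∀ p ∈ P, IsRealTree p) :
    IsRealTree Y := by
  have hmed : ∀ (A B D : Set Y) (a b c : Y), Arc A a b → Arc B b c → Arc D c a →
      ∃ m ∈ A, m ∈ B ∧ m ∈ D := fun A B D a b c hA hB hD =>
    exists_median (fun A B D a b c => eq_of_arcs_meet_in_vertices htriangle hpieces) hA hB hD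
  refine ⟨hgeo, fun a b c α β δ hα hβ hδ => ?_⟩
  have hA : Arc _ a b := ⟨α, hα, rfl⟩
  have hB : Arc _ b c := ⟨β, hβ, rfl⟩
  have hD : Arc _ c a := ⟨δ, hδ, rfl⟩
  refine ⟨hA.subset_union hgeo hmed hB hD, ?_, hD.subset_union hgeo hmed hA hB⟩
  rw [Set.union_comm]
  exact hB.subset_union hgeo hmed hD hA
end

section
/- A group acting on a tree has a subgroup of index at most two acting without inversions: let G be a group acting on a simple graph T by graph automorphisms (i.e., the action on the vertex set preserves adjacency), where T is a tree (connected and acyclic). Then there exists a subgroup H ≤ G of index at most 2 such that no element of H inverts an edge of T, i.e., there are no h ∈ H and adjacent vertices u, v of T with h·u = v and h·v = u. -/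
/-!
A tree is bipartite: colour each vertex by the parity of its distance to a fixed base vertex, so
that adjacent vertices get opposite colours. As the tree is connected, each `g : G` either preserves
the colour of every vertex or swaps the colour of every vertex
(`preserves_or_swaps_of_connected`). The colour-preserving elements form a subgroup of index
at most two, and an element inverting an edge would move a vertex to a neighbour, which has the
opposite colour.
-/

/-- On a connected graph with a 2-colouring `P`, any adjacency-preserving map either preserves the
colour of every vertex or swaps the colour of every vertex. -/
theorem preserves_or_swaps_of_connected {V : Type*} {T : SimpleGraph V} (hT : T.Connected)
    {P : V → Prop} (hP : ∀ u v, T.Adj u v → (P u ↔ ¬P v)) (f : V → V)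
    (hf : ∀ u v, T.Adj u v → T.Adj (f u) (f v)) :
    (∀ v, P (f v) ↔ P v) ∨ (∀ v, P (f v) ↔ ¬P v) := by
  have walk_const : ∀ u v, T.Walk u v → ((P (f u) ↔ P u) ↔ (P (f v) ↔ P v)) := by
    intro u v p
    induction p with
    | nil => rfl
    | cons h _ ih =>
      have h1 := hP _ _ h
      have h2 := hP _ _ (hf _ _ h)
      tauto
  obtain ⟨b⟩ := hT.nonempty
  by_cases hb : P (f b) ↔ P b
  · left
    intro v
    obtain ⟨p⟩ := hT.preconnected b v
    exact (walk_const b v p).1 hb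
  · right
    intro v
    obtain ⟨p⟩ := hT.preconnected b v
    have := walk_const b v p
    tauto

/-- A group acting on a tree by graph automorphisms has a subgroup of index at most two
that acts without inversions of edges. -/
theorem exists_index_le_two_subgroup_acting_without_inversions
    {G V : Type*} [Group G] [MulAction G V] (T : SimpleGraph V) (hT : T.IsTree)
    (hadj : ∀ (g : G) (u v : V), T.Adj (g • u) (g • v) ↔ T.Adj u v) :
    ∃ H : Subgroup G, (H.index = 1 ∨ H.index = 2) ∧
      ∀ h ∈ H, ∀ u v : V, T.Adj u v → ¬(h • u = v ∧ h • v = u) := by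
  obtain ⟨b⟩ := hT.connected.nonempty
  obtain ⟨P, hP⟩ : ∃ P : V → Prop, ∀ u v, T.Adj u v → (P u ↔ ¬P v) := by
    refine ⟨fun v => Even (T.dist b v), fun u v h => ?_⟩
    rcases hT.dist_eq_dist_add_one_of_adj b h with h | h <;> simp [h, Nat.even_add_one]
  let H : Subgroup G :=
    { carrier := {g | ∀ v, P (g • v) ↔ P v}
      one_mem' := fun v => by rw [one_smul]
      mul_mem' := fun {x y} hx hy v => by rw [mul_smul]; exact (hx _).trans (hy v)
      inv_mem' := fun {x} hx v => by
        have := hx (x⁻¹ • v)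
        rw [smul_inv_smul] at this
        exact this.symm }
  have mem_H : ∀ g, g ∈ H ↔ ∀ v, P (g • v) ↔ P v := fun g => Iff.rfl
  have swaps : ∀ g, g ∉ H → ∀ v, P (g • v) ↔ ¬P v := fun g hg =>
    (preserves_or_swaps_of_connected hT.connected hP (g • ·)
      (fun u v => (hadj g u v).2)).resolve_left hg
  refine ⟨H, ?_, ?_⟩
  · by_cases hH : H = ⊤
    · exact Or.inl (Subgroup.index_eq_one.2 hH)
    · right
      obtain ⟨a, ha⟩ : ∃ a, a ∉ H := by
        by_contra! h
        exact hH ((Subgroup.eq_top_iff' H).2 h)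
      refine Subgroup.index_eq_two_iff.2 ⟨a, fun g => ?_⟩
      by_cases hg : g ∈ H
      · exact Or.inr ⟨hg, fun h => ha ((H.mul_mem_cancel_left hg).1 h)⟩
      · -- Both `g` and `a` swap the two colours, so their product preserves them.
        refine Or.inl ⟨(mem_H _).2 fun v => ?_, hg⟩
        rw [mul_smul, swaps g hg, swaps a ha, not_not]
  · rintro h hh u v huv ⟨rfl, -⟩
    have h1 := (mem_H h).1 hh u
    have h2 := hP _ _ huv
    tauto
end
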